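/- arXiv:1308.5041 — 2 statements merged into one kernel-verified Lean document; each statement's English description precedes it below -/
import Mathlib

section
/- Let q be a prime power and let n ≥ 1, m ≥ 1 be integers. Then |π_q(q^n) − (q/(q−1))·q^n/n − (1/(q−1))·∑_{j=1}^{m−1} 𝒮_j(q/(q−1))·q^n/n^{j+1}| ≤ 11·q^{n/2}/n + m!·(3^{m+3}·q^{n−1}/n^{m+1} + 2^{m+1}/n), where 𝒮_j(x) = ∑_{i=0}^{j} (−1)^{j−i}·i!·S(j,i)·x^i. -/
/-- The Stirling numbers of the second kind: `stirling2 n k` is the number of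
partitions of a set with `n` elements into `k` nonempty blocks. -/
def stirling2 : ℕ → ℕ → ℕ
  | 0, 0 => 1
  | 0, _ + 1 => 0
  | _ + 1, 0 => 0
  | n + 1, k + 1 => (k + 1) * stirling2 n (k + 1) + stirling2 n k

/-- The polynomial `𝒮_j(x) = ∑_{i=0}^{j} (−1)^{j−i}·i!·S(j,i)·x^i` evaluated at a real `x`. -/
noncomputable def stirlingPoly (j : ℕ) (x : ℝ) : ℝ :=
  ∑ i ∈ Finset.range (j + 1),
    (-1 : ℝ) ^ (j - i) * (Nat.factorial i) * (stirling2 j i) * x ^ i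

section CountIrreducibles

open Polynomial UniqueFactorizationMonoid

variable (F : Type*) [Field F] [Finite F]

open Classical in
/-- The monic irreducible polynomials of degree `d` over a finite field. -/
noncomputable def monicIrreducibles (d : ℕ) : Finset F[X] :=
  {f ∈ (normalizedFactors (X ^ Nat.card F ^ d - X : F[X])).toFinset | f.natDegree = d}

variable {F}

theorem X_pow_natCard_pow_sub_X_ne_zero {k : ℕ} (hk : k ≠ 0) :
    (X ^ Nat.card F ^ k - X : F[X]) ≠ 0 :=
  FiniteField.X_pow_card_pow_sub_X_ne_zero F hk Finite.one_lt_card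

open Classical in
theorem mem_normalizedFactors_X_pow_sub_X {k : ℕ} (hk : k ≠ 0) {f : F[X]} :
    f ∈ normalizedFactors (X ^ Nat.card F ^ k - X : F[X]) ↔
      f.Monic ∧ Irreducible f ∧ f.natDegree ∣ k := by
  rw [Polynomial.mem_normalizedFactors_iff (X_pow_natCard_pow_sub_X_ne_zero hk)]
  constructor
  · rintro ⟨hi, hm, hd⟩
    exact ⟨hm, hi, hi.natDegree_dvd_iff_dvd_X_pow_card_pow_sub_X.2 hd⟩
  · rintro ⟨hm, hi, hd⟩
    exact ⟨hi, hm, hi.natDegree_dvd_iff_dvd_X_pow_card_pow_sub_X.1 hd⟩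

theorem mem_monicIrreducibles {d : ℕ} {f : F[X]} :
    f ∈ monicIrreducibles F d ↔ f.Monic ∧ Irreducible f ∧ f.natDegree = d := by
  classical
  rcases eq_or_ne d 0 with rfl | hd
  · simp only [monicIrreducibles, pow_zero, pow_one, sub_self, normalizedFactors_zero,
      Multiset.toFinset_zero, Finset.filter_empty, Finset.notMem_empty, false_iff]
    rintro ⟨-, hi, h⟩
    exact hi.natDegree_pos.ne' h
  · rw [monicIrreducibles, Finset.mem_filter, Multiset.mem_toFinset,
      mem_normalizedFactors_X_pow_sub_X hd]
    constructor
    · rintro ⟨⟨hm, hi, -⟩, h⟩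
      exact ⟨hm, hi, h⟩
    · rintro ⟨hm, hi, h⟩
      exact ⟨⟨hm, hi, h.dvd⟩, h⟩

theorem pairwiseDisjoint_monicIrreducibles (s : Set ℕ) :
    s.PairwiseDisjoint (monicIrreducibles F) := by
  intro a _ b _ hab
  refine Finset.disjoint_left.2 fun f ha hb => hab ?_
  rw [mem_monicIrreducibles] at ha hb
  exact ha.2.2.symm.trans hb.2.2

theorem sum_divisors_mul_card_monicIrreducibles {k : ℕ} (hk : k ≠ 0) :
    ∑ d ∈ k.divisors, d * (monicIrreducibles F d).card = Nat.card F ^ k := by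
  classical
  have hne := X_pow_natCard_pow_sub_X_ne_zero (F := F) hk
  have hnodup : (normalizedFactors (X ^ Nat.card F ^ k - X : F[X])).Nodup := by
    rw [← squarefree_iff_nodup_normalizedFactors hne]
    obtain ⟨p, hp⟩ := CharP.exists F
    have := Fintype.ofFinite F
    refine (galois_poly_separable p _ (dvd_pow ?_ hk)).squarefree
    rw [← CharP.cast_eq_zero_iff F p, Nat.card_eq_fintype_card]
    exact FiniteField.cast_card_eq_zero F
  have hdeg : ((normalizedFactors (X ^ Nat.card F ^ k - X : F[X])).map natDegree).sum =
      Nat.card F ^ k := by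
    rw [← natDegree_multiset_prod_of_monic]
    · rw [natDegree_eq_of_degree_eq (degree_eq_degree_of_associated (prod_normalizedFactors hne))]
      exact FiniteField.X_pow_card_pow_sub_X_natDegree_eq F hk Finite.one_lt_card
    · exact fun f hf => ((mem_normalizedFactors_X_pow_sub_X hk).1 hf).1
  rw [← hdeg]
  have hset : (normalizedFactors (X ^ Nat.card F ^ k - X : F[X])).toFinset =
      k.divisors.biUnion (monicIrreducibles F) := by
    ext f
    simp only [Multiset.mem_toFinset, mem_normalizedFactors_X_pow_sub_X hk, Finset.mem_biUnion,
      Nat.mem_divisors, mem_monicIrreducibles]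
    constructor
    · rintro ⟨hm, hi, hd⟩
      exact ⟨_, ⟨hd, hk⟩, hm, hi, rfl⟩
    · rintro ⟨_, ⟨hd, -⟩, hm, hi, rfl⟩
      exact ⟨hm, hi, hd⟩
  calc ∑ d ∈ k.divisors, d * (monicIrreducibles F d).card
      = ∑ d ∈ k.divisors, ∑ f ∈ monicIrreducibles F d, f.natDegree := by
        refine Finset.sum_congr rfl fun d _ => ?_
        rw [Finset.sum_congr rfl fun f hf => (mem_monicIrreducibles.1 hf).2.2, Finset.sum_const,
          smul_eq_mul, mul_comm]
    _ = ∑ f ∈ (normalizedFactors (X ^ Nat.card F ^ k - X : F[X])).toFinset, f.natDegree := by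
        rw [hset, Finset.sum_biUnion (pairwiseDisjoint_monicIrreducibles _)]
    _ = _ := by
        rw [Finset.sum_eq_multiset_sum, Multiset.toFinset_val, hnodup.dedup]

theorem card_monic_irreducible_natDegree_le (n : ℕ) :
    Nat.card {f : F[X] // f.Monic ∧ Irreducible f ∧ f.natDegree ≤ n} =
      ∑ d ∈ Finset.Icc 1 n, (monicIrreducibles F d).card := by
  classical
  rw [← Finset.card_biUnion (pairwiseDisjoint_monicIrreducibles _)]
  refine Nat.subtype_card _ fun f => ?_
  simp only [Finset.mem_biUnion, Finset.mem_Icc, mem_monicIrreducibles]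
  constructor
  · rintro ⟨_, ⟨-, h⟩, hm, hi, rfl⟩
    exact ⟨hm, hi, h⟩
  · rintro ⟨hm, hi, h⟩
    exact ⟨_, ⟨hi.natDegree_pos, h⟩, hm, hi, rfl⟩

theorem mul_card_monicIrreducibles_le {k : ℕ} (hk : k ≠ 0) :
    k * (monicIrreducibles F k).card ≤ Nat.card F ^ k := by
  rw [← sum_divisors_mul_card_monicIrreducibles hk]
  exact Finset.single_le_sum (f := fun d => d * (monicIrreducibles F d).card)
    (fun _ _ => Nat.zero_le _) (Nat.mem_divisors_self k hk)

theorem card_monicIrreducibles_one : (monicIrreducibles F 1).card = Nat.card F := by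
  simpa using sum_divisors_mul_card_monicIrreducibles (F := F) one_ne_zero

theorem natCard_pow_le_mul_card_monicIrreducibles {k : ℕ} (hk : k ≠ 0) :
    Nat.card F ^ k ≤ k * (monicIrreducibles F k).card + 2 * Nat.card F ^ (k / 2) := by
  have hq : 2 ≤ Nat.card F := Finite.one_lt_card
  rw [← sum_divisors_mul_card_monicIrreducibles hk, ← Nat.cons_self_properDivisors hk,
    Finset.sum_cons]
  gcongr
  have hsub : k.properDivisors ⊆ Finset.range (k / 2 + 1) := by
    intro d hd
    rw [Nat.mem_properDivisors] at hd
    obtain ⟨⟨c, rfl⟩, hlt⟩ := hd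
    have hc : 2 ≤ c := by
      by_contra! h
      interval_cases c <;> omega
    rw [Finset.mem_range, Nat.lt_succ_iff, Nat.le_div_iff_mul_le two_pos]
    exact Nat.mul_le_mul_left d hc
  calc ∑ d ∈ k.properDivisors, d * (monicIrreducibles F d).card
      ≤ ∑ d ∈ k.properDivisors, Nat.card F ^ d :=
        Finset.sum_le_sum fun d hd =>
          mul_card_monicIrreducibles_le (Nat.pos_of_mem_properDivisors hd).ne'
    _ ≤ ∑ d ∈ Finset.range (k / 2 + 1), Nat.card F ^ d :=
        Finset.sum_le_sum_of_subset hsub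
    _ ≤ 2 * Nat.card F ^ (k / 2) := by
        rw [Finset.sum_range_succ, two_mul]
        gcongr
        exact (Nat.geomSum_lt hq fun i hi => Finset.mem_range.1 hi).le

end CountIrreducibles

section Series

open Finset

theorem stirling2_eq_zero_of_lt : ∀ {n k : ℕ}, n < k → stirling2 n k = 0
  | 0, _ + 1, _ => rfl
  | n + 1, k + 1, h => by
    rw [stirling2, stirling2_eq_zero_of_lt (n := n) (k := k + 1) (by omega),
      stirling2_eq_zero_of_lt (n := n) (k := k) (by omega), mul_zero]

theorem pow_eq_sum_stirling2_mul_ascFactorial (t j : ℕ) :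
    ((t : ℝ) + 1) ^ j = ∑ i ∈ range (j + 1),
      (-1 : ℝ) ^ (j - i) * stirling2 j i * ((t + 1).ascFactorial i : ℝ) := by
  induction j with
  | zero => simp [stirling2]
  | succ j ih =>
    rw [pow_succ, ih, sum_range_succ' _ (j + 1)]
    have hstep (i : ℕ) : ((t + 1).ascFactorial i : ℝ) * (t + 1) =
        (t + 1).ascFactorial (i + 1) - i * (t + 1).ascFactorial i := by
      rw [Nat.ascFactorial_succ]
      push_cast
      ring
    have hshift : ∑ i ∈ range (j + 1),
          (-1 : ℝ) ^ (j - i) * stirling2 j i * (i * (t + 1).ascFactorial i) =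
        -∑ i ∈ range (j + 1), (-1 : ℝ) ^ (j - i) * ((i + 1) * stirling2 j (i + 1)) *
          (t + 1).ascFactorial (i + 1) := by
      rw [sum_range_succ', sum_range_succ _ j, stirling2_eq_zero_of_lt (Nat.lt_succ_self j)]
      simp only [CharP.cast_eq_zero, zero_mul, mul_zero, add_zero, ← sum_neg_distrib]
      refine sum_congr rfl fun i hi => ?_
      obtain ⟨c, rfl⟩ := Nat.exists_eq_add_of_lt (mem_range.1 hi)
      rw [show i + c + 1 - (i + 1) = c by omega, show i + c + 1 - i = c + 1 by omega]
      push_cast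
      ring
    calc (∑ i ∈ range (j + 1), (-1 : ℝ) ^ (j - i) * stirling2 j i * (t + 1).ascFactorial i) *
          (t + 1)
        = ∑ i ∈ range (j + 1), (-1 : ℝ) ^ (j - i) * stirling2 j i * (t + 1).ascFactorial (i + 1) -
          ∑ i ∈ range (j + 1),
            (-1 : ℝ) ^ (j - i) * stirling2 j i * (i * (t + 1).ascFactorial i) := by
          rw [sum_mul, ← sum_sub_distrib]
          refine sum_congr rfl fun i _ => ?_
          rw [mul_assoc, hstep, mul_sub]
      _ = _ := by
          rw [hshift, sub_neg_eq_add, ← sum_add_distrib]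
          simp only [stirling2, CharP.cast_eq_zero, mul_zero, zero_mul, add_zero]
          refine sum_congr rfl fun i _ => ?_
          rw [Nat.add_sub_add_right]
          push_cast
          ring

theorem hasSum_succ_pow_mul_geometric {y : ℝ} (hy : |y| < 1) (j : ℕ) :
    HasSum (fun t : ℕ => ((t : ℝ) + 1) ^ j * y ^ t) ((1 - y)⁻¹ * stirlingPoly j (1 - y)⁻¹) := by
  have h := hasSum_sum (s := range (j + 1)) fun i _ =>
    (hasSum_choose_mul_geometric_of_norm_lt_one i (r := y) hy).mul_left
      ((-1 : ℝ) ^ (j - i) * stirling2 j i * i.factorial)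
  convert! h using 1
  · funext t
    rw [pow_eq_sum_stirling2_mul_ascFactorial, sum_mul]
    refine sum_congr rfl fun i _ => ?_
    rw [Nat.ascFactorial_eq_factorial_mul_choose]
    push_cast
    ring
  · rw [stirlingPoly, mul_sum]
    refine sum_congr rfl fun i _ => ?_
    rw [one_div, ← inv_pow]
    ring

theorem hasSum_pow_mul_geometric {y : ℝ} (hy : |y| < 1) {j : ℕ} (hj : j ≠ 0) :
    HasSum (fun t : ℕ => (t : ℝ) ^ j * y ^ t) (y * (1 - y)⁻¹ * stirlingPoly j (1 - y)⁻¹) := by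
  rw [← hasSum_nat_add_iff' 1]
  convert! (hasSum_succ_pow_mul_geometric hy j).mul_left y using 1
  · funext t
    push_cast
    ring
  · simp [hj, mul_assoc]

theorem hasSum_ascFactorial_mul_half_pow (k : ℕ) :
    HasSum (fun t : ℕ => ((t + 1).ascFactorial k : ℝ) * (1 / 2) ^ t)
      (k.factorial * 2 ^ (k + 1)) := by
  convert! (hasSum_choose_mul_geometric_of_norm_lt_one k (r := (1 / 2 : ℝ))
    (by norm_num)).mul_left (k.factorial : ℝ) using 1
  · funext t
    rw [Nat.ascFactorial_eq_factorial_mul_choose]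
    push_cast
    ring
  · rw [show (1 : ℝ) - 1 / 2 = 2⁻¹ by norm_num, inv_pow, one_div, inv_inv]

theorem sum_factorial_mul_two_pow_le (m : ℕ) :
    ∑ j ∈ range m, (j.factorial : ℝ) * 2 ^ (j + 1) ≤ m.factorial * 2 ^ (m + 1) := by
  induction m with
  | zero => simp
  | succ m ih =>
    rw [sum_range_succ, Nat.factorial_succ]
    have : (0 : ℝ) ≤ m * (m.factorial * 2 ^ (m + 1)) := by positivity
    push_cast
    rw [pow_succ _ (m + 1)]
    nlinarith

theorem sum_mul_geometric_head_le {y : ℝ} (hy0 : 0 ≤ y) (hy : y ≤ 1 / 2) {m : ℕ} (hm : m ≠ 0)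
    (n : ℕ) :
    ∑ l ∈ range n, y ^ l * ((l : ℝ) ^ m * (l + 1)) ≤ y * (m.factorial * 3 ^ (m + 3)) := by
  have hterm (t : ℕ) : y ^ (t + 1) * (((t + 1 : ℕ) : ℝ) ^ m * ((t + 1 : ℕ) + 1)) ≤
      y * (((t + 1).ascFactorial (m + 1) : ℝ) * (1 / 2) ^ t) := by
    have h1 : ((t + 1) ^ m * (t + 1 + 1) : ℕ) ≤ (t + 1).ascFactorial (m + 1) := by
      rw [Nat.ascFactorial_succ, mul_comm]
      exact Nat.mul_le_mul (by omega) (Nat.pow_succ_le_ascFactorial _ _)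
    have h2 : (((t + 1 : ℕ) : ℝ) ^ m * ((t + 1 : ℕ) + 1)) ≤ (t + 1).ascFactorial (m + 1) := by
      exact_mod_cast h1
    rw [pow_succ', mul_assoc, mul_comm (y ^ t)]
    gcongr
  have hconst : ((m : ℝ) + 1) * 2 ^ (m + 2) ≤ 3 ^ (m + 3) := by
    clear hm hterm
    induction m with
    | zero => norm_num
    | succ m ih =>
      rw [pow_succ _ (m + 2), pow_succ _ (m + 3)]
      push_cast
      have h3 : (27 : ℝ) * 2 ^ m ≤ 27 * 3 ^ m := by gcongr; norm_num
      have e2 : (2 : ℝ) ^ (m + 2) = 4 * 2 ^ m := by ring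
      have e3 : (3 : ℝ) ^ (m + 3) = 27 * 3 ^ m := by ring
      nlinarith [pow_pos (two_pos : (0 : ℝ) < 2) m]
  calc ∑ l ∈ range n, y ^ l * ((l : ℝ) ^ m * (l + 1))
      ≤ ∑ l ∈ range (n + 1), y ^ l * ((l : ℝ) ^ m * (l + 1)) :=
        sum_le_sum_of_subset_of_nonneg (range_subset_range.2 n.le_succ) fun _ _ _ => by positivity
    _ = ∑ t ∈ range n, y ^ (t + 1) * (((t + 1 : ℕ) : ℝ) ^ m * ((t + 1 : ℕ) + 1)) := by
        rw [sum_range_succ']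
        simp [hm]
    _ ≤ ∑ t ∈ range n, y * (((t + 1).ascFactorial (m + 1) : ℝ) * (1 / 2) ^ t) :=
        sum_le_sum fun t _ => hterm t
    _ ≤ y * ((m + 1).factorial * 2 ^ (m + 2)) := by
        rw [← mul_sum]
        gcongr
        exact sum_le_hasSum _ (fun _ _ => by positivity) (hasSum_ascFactorial_mul_half_pow (m + 1))
    _ ≤ y * (m.factorial * 3 ^ (m + 3)) := by
        rw [Nat.factorial_succ]
        push_cast
        rw [mul_comm ((m : ℝ) + 1), mul_assoc]
        gcongr

theorem hasSum_tail_le {y : ℝ} (hy0 : 0 ≤ y) (hy : y ≤ 1 / 2) {n : ℕ} (hn : 1 ≤ n) (m : ℕ) {a : ℝ}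
    (ha : HasSum (fun h : ℕ =>
      y ^ h * ∑ j ∈ range m, ((h + n : ℕ) : ℝ) ^ j / (n : ℝ) ^ (j + 1)) a) :
    a ≤ m.factorial * (2 ^ (m + 1) / n) := by
  have hn' : (1 : ℝ) ≤ n := by exact_mod_cast hn
  have hsum := (hasSum_sum (s := range m) fun j _ =>
    hasSum_ascFactorial_mul_half_pow j).div_const (n : ℝ)
  refine (hasSum_le (fun h => ?_) ha hsum).trans ?_
  · rw [mul_sum, sum_div]
    refine sum_le_sum fun j _ => ?_
    have h1 : ((h + n : ℕ) : ℝ) / n ≤ (h + 1 : ℕ) := by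
      rw [div_le_iff₀ (by positivity)]
      push_cast
      nlinarith [(Nat.cast_nonneg h : (0 : ℝ) ≤ h)]
    have h2 : (((h + n : ℕ) : ℝ) / n) ^ j ≤ (h + 1).ascFactorial j := by
      calc (((h + n : ℕ) : ℝ) / n) ^ j ≤ ((h + 1 : ℕ) : ℝ) ^ j := by gcongr
        _ ≤ (h + 1).ascFactorial j := by exact_mod_cast Nat.pow_succ_le_ascFactorial _ _
    calc y ^ h * (((h + n : ℕ) : ℝ) ^ j / (n : ℝ) ^ (j + 1))
        = ((((h + n : ℕ) : ℝ) / n) ^ j * y ^ h) / n := by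
          rw [div_pow, pow_succ]
          field_simp
      _ ≤ _ := by gcongr
  · rw [← mul_div_assoc]
    gcongr
    exact sum_factorial_mul_two_pow_le m

end Series

section Comparison

open Finset

theorem inv_sub_sub_sum_div_eq {n l : ℝ} (hn : n ≠ 0) (hl : n - l ≠ 0) (m : ℕ) :
    1 / (n - l) - ∑ j ∈ range m, l ^ j / n ^ (j + 1) = l ^ m / (n ^ m * (n - l)) := by
  induction m with
  | zero => simp
  | succ m ih =>
    rw [sum_range_succ, ← sub_sub, ih]
    field_simp
    ring

theorem abs_sum_geometric_div_sub_le {y : ℝ} (hy0 : 0 ≤ y) (hy : y ≤ 1 / 2) {n m : ℕ} (hn : 1 ≤ n)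
    (hm : m ≠ 0) {a : ℝ}
    (ha : HasSum (fun l : ℕ => y ^ l * ∑ j ∈ range m, (l : ℝ) ^ j / (n : ℝ) ^ (j + 1)) a) :
    |∑ l ∈ range n, y ^ l / ((n : ℝ) - l) - a| ≤
      y * (m.factorial * 3 ^ (m + 3)) / (n : ℝ) ^ (m + 1) +
        y ^ n * (m.factorial * (2 ^ (m + 1) / n)) := by
  have hn' : (0 : ℝ) < n := by exact_mod_cast hn
  set g : ℕ → ℝ := fun l => ∑ j ∈ range m, (l : ℝ) ^ j / (n : ℝ) ^ (j + 1) with hg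
  have hlt {l : ℕ} (hl : l ∈ range n) : (1 : ℝ) ≤ n - l := by
    have : ((l + 1 : ℕ) : ℝ) ≤ n := by exact_mod_cast mem_range.1 hl
    push_cast at this
    linarith
  set H := ∑ l ∈ range n, y ^ l * ((l : ℝ) ^ m / ((n : ℝ) ^ m * (n - l))) with hH
  set T := a - ∑ l ∈ range n, y ^ l * g l with hT
  have hsplit : ∑ l ∈ range n, y ^ l / ((n : ℝ) - l) - a = H - T := by
    rw [hT, hH, ← sub_add, sub_add_eq_add_sub, ← sum_add_distrib]
    congr 1
    refine sum_congr rfl fun l hl => ?_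
    rw [← inv_sub_sub_sum_div_eq hn'.ne' (by linarith [hlt hl])]
    ring
  have hH0 : 0 ≤ H := sum_nonneg fun l hl => by
    have := hlt hl
    positivity
  have hHle : H ≤ y * (m.factorial * 3 ^ (m + 3)) / (n : ℝ) ^ (m + 1) := by
    rw [le_div_iff₀ (by positivity), hH, sum_mul]
    refine (sum_le_sum fun l hl => ?_).trans (sum_mul_geometric_head_le hy0 hy hm n)
    have h1 := hlt hl
    have h2 : (0 : ℝ) < n - l := by linarith
    rw [mul_assoc]
    refine mul_le_mul_of_nonneg_left ?_ (pow_nonneg hy0 l)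
    rw [div_mul_eq_mul_div, div_le_iff₀ (by positivity), pow_succ]
    have h3 : (n : ℝ) ≤ (l + 1) * (n - l) := by
      nlinarith [(Nat.cast_nonneg l : (0 : ℝ) ≤ l)]
    calc (l : ℝ) ^ m * (n ^ m * n) = (l : ℝ) ^ m * n ^ m * n := by ring
      _ ≤ (l : ℝ) ^ m * n ^ m * ((l + 1) * (n - l)) := by gcongr
      _ = _ := by ring
  have hTsum : HasSum (fun h : ℕ => y ^ n * (y ^ h * g (h + n))) T := by
    have h := (hasSum_nat_add_iff' n).2 ha
    convert! h using 1
    funext h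
    rw [pow_add]
    ring
  have hT0 : 0 ≤ T := hTsum.nonneg fun h => by positivity
  have hTle : T ≤ y ^ n * (m.factorial * (2 ^ (m + 1) / n)) := by
    rcases hy0.eq_or_lt with rfl | hpos
    · rw [zero_pow (by omega)] at hTsum ⊢
      simp only [zero_mul] at hTsum ⊢
      exact (hTsum.unique hasSum_zero).le
    · have h := hTsum.div_const (y ^ n)
      simp only [mul_div_cancel_left₀ _ (pow_pos hpos n).ne'] at h
      rw [← div_le_iff₀' (pow_pos hpos n)]
      exact hasSum_tail_le hy0 hy hn m h
  rw [hsplit, abs_le]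
  constructor
  · have : 0 ≤ y * (m.factorial * 3 ^ (m + 3)) / (n : ℝ) ^ (m + 1) := by positivity
    linarith
  · have : 0 ≤ y ^ n * (m.factorial * (2 ^ (m + 1) / (n : ℝ))) := by positivity
    linarith

theorem hasSum_geometric_mul_sum_pow_div {y : ℝ} (hy : |y| < 1) {m : ℕ} (hm : 1 ≤ m) (n : ℝ) :
    HasSum (fun l : ℕ => y ^ l * ∑ j ∈ range m, (l : ℝ) ^ j / n ^ (j + 1))
      ((1 - y)⁻¹ / n + y * (1 - y)⁻¹ *
        ∑ j ∈ Icc 1 (m - 1), stirlingPoly j (1 - y)⁻¹ / n ^ (j + 1)) := by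
  have hrange : range m = insert 0 (Icc 1 (m - 1)) := by
    ext i
    simp only [mem_range, mem_insert, mem_Icc]
    omega
  have h0 : HasSum (fun l : ℕ => y ^ l / n) ((1 - y)⁻¹ / n) :=
    (hasSum_geometric_of_abs_lt_one hy).div_const n
  have h1 := hasSum_sum (s := Icc 1 (m - 1)) fun j hj =>
    (hasSum_pow_mul_geometric hy (by have := mem_Icc.1 hj; omega : j ≠ 0)).div_const (n ^ (j + 1))
  convert! h0.add h1 using 1
  · funext l
    rw [hrange, sum_insert (by simp), mul_add, mul_sum]
    congr 1
    · simp [div_eq_mul_inv]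
    · exact sum_congr rfl fun j _ => by ring
  · rw [mul_sum]
    simp only [mul_div_assoc]

theorem sum_Icc_pow_div_eq {q : ℝ} (hq : q ≠ 0) (n : ℕ) :
    ∑ k ∈ Icc 1 n, q ^ k / k = q ^ n * ∑ l ∈ range n, q⁻¹ ^ l / ((n : ℝ) - l) := by
  rw [mul_sum]
  refine sum_bij' (fun k _ => n - k) (fun l _ => n - l) ?_ ?_ ?_ ?_ ?_
  · intro k hk
    rw [mem_Icc] at hk
    rw [mem_range]
    omega
  · intro l hl
    rw [mem_range] at hl
    rw [mem_Icc]
    omega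
  · intro k hk
    rw [mem_Icc] at hk
    omega
  · intro l hl
    rw [mem_range] at hl
    omega
  · intro k hk
    rw [mem_Icc] at hk
    obtain ⟨c, rfl⟩ := Nat.exists_eq_add_of_le hk.2
    rw [Nat.add_sub_cancel_left]
    push_cast
    rw [add_sub_cancel_right, pow_add, inv_pow]
    field_simp

/-- Bounds the total deviation of the counts of monic irreducibles from `q ^ k / k`, `2 ≤ k ≤ n`. -/
theorem sum_Icc_two_mul_pow_half_div_le {q : ℕ} (hq : 2 ≤ q) {n : ℕ} (hn : 1 ≤ n) :
    ∑ k ∈ Icc 2 n, 2 * (q : ℝ) ^ (k / 2) / k ≤ 11 * √(q : ℝ) ^ n / n := by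
  have hq' : (2 : ℝ) ≤ q := by exact_mod_cast hq
  set s := √(q : ℝ) with hs
  have hs2 : s ^ 2 = q := Real.sq_sqrt (by positivity)
  have hs0 : 0 ≤ s := Real.sqrt_nonneg _
  have hs1 : 1.41 ≤ s := Real.le_sqrt_of_sq_le (by norm_num; linarith)
  have hs3 : 1.41 * q ≤ s ^ 3 := by
    rw [pow_succ, hs2]
    nlinarith
  have hs5 : 1.41 * (q : ℝ) ^ 2 ≤ s ^ 5 := by
    rw [show s ^ 5 = (s ^ 2) ^ 2 * s by ring, hs2]
    nlinarith [sq_nonneg (q : ℝ)]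
  have hs7 : 1.41 * (q : ℝ) ^ 3 ≤ s ^ 7 := by
    rw [show s ^ 7 = (s ^ 2) ^ 3 * s by ring, hs2]
    nlinarith [pow_nonneg (by positivity : (0 : ℝ) ≤ q) 3]
  have hs4 : s ^ 4 = (q : ℝ) ^ 2 := by rw [← hs2]; ring
  have hs6 : s ^ 6 = (q : ℝ) ^ 3 := by rw [← hs2]; ring
  have hq2 : 2 * (q : ℝ) ≤ q ^ 2 := by nlinarith
  have hq3 : 2 * (q : ℝ) ^ 2 ≤ q ^ 3 := by nlinarith [sq_nonneg (q : ℝ)]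
  rcases lt_or_ge n 7 with h7 | h7
  · interval_cases n <;> norm_num [sum_Icc_succ_top] <;>
      linarith
  · induction n, h7 using Nat.le_induction with
    | base =>
      norm_num [sum_Icc_succ_top]
      linarith
    | succ n h7 ih =>
      rw [sum_Icc_succ_top (by omega)]
      have hn7 : (7 : ℝ) ≤ n := by exact_mod_cast h7
      have hhalf : (q : ℝ) ^ ((n + 1) / 2) ≤ s ^ (n + 1) := by
        rw [← hs2, ← pow_mul]
        exact pow_le_pow_right₀ (by linarith) (Nat.mul_div_le _ _)
      refine (add_le_add (ih (by omega)) (show _ ≤ 2 * s ^ (n + 1) / ((n + 1 : ℕ) : ℝ) by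
        gcongr)).trans ?_
      push_cast
      rw [div_add_div _ _ (by positivity) (by positivity), div_le_div_iff₀ (by positivity)
        (by positivity), pow_succ]
      have key : 11 * ((n : ℝ) + 1) + n * (2 * s) ≤ 11 * s * n := by nlinarith
      have hp : 0 ≤ s ^ n * ((n : ℝ) + 1) := by positivity
      nlinarith [mul_le_mul_of_nonneg_left key hp]

end Comparison

theorem abs_sum_card_monicIrreducibles_sub_le {F : Type*} [Field F] [Finite F] {n : ℕ}
    (hn : 1 ≤ n) :
    |∑ d ∈ Finset.Icc 1 n, ((monicIrreducibles F d).card : ℝ) -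
        ∑ d ∈ Finset.Icc 1 n, (Nat.card F : ℝ) ^ d / d| ≤ 11 * √(Nat.card F : ℝ) ^ n / n := by
  have hterm (d : ℕ) (hd : d ∈ Finset.Icc 2 n) :
      (Nat.card F : ℝ) ^ d / d - (monicIrreducibles F d).card ≤
        2 * (Nat.card F : ℝ) ^ (d / 2) / d := by
    have hd0 : d ≠ 0 := by
      have := Finset.mem_Icc.1 hd
      omega
    have hpos : (0 : ℝ) < d := by positivity
    rw [sub_le_iff_le_add', ← sub_le_iff_le_add, ← sub_div, div_le_iff₀ hpos, sub_le_iff_le_add,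
      mul_comm]
    exact_mod_cast natCard_pow_le_mul_card_monicIrreducibles hd0
  have hsplit (f : ℕ → ℝ) : ∑ d ∈ Finset.Icc 1 n, f d = f 1 + ∑ d ∈ Finset.Icc 2 n, f d := by
    rw [← Finset.insert_Icc_add_one_left_eq_Icc hn, Finset.sum_insert (by simp), one_add_one_eq_two]
  rw [abs_sub_comm, abs_of_nonneg]
  · rw [← Finset.sum_sub_distrib, hsplit, card_monicIrreducibles_one]
    simp only [pow_one, Nat.cast_one, div_one, sub_self, zero_add]
    exact (Finset.sum_le_sum hterm).trans
      (sum_Icc_two_mul_pow_half_div_le Finite.one_lt_card hn)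
  · rw [sub_nonneg]
    refine Finset.sum_le_sum fun d hd => ?_
    have hd0 : d ≠ 0 := by
      have := Finset.mem_Icc.1 hd
      omega
    rw [le_div_iff₀ (by positivity), mul_comm]
    exact_mod_cast mul_card_monicIrreducibles_le hd0

theorem stmt_0 (q : ℕ) (hq : IsPrimePow q) (F : Type*) [Field F] [Fintype F]
    (hF : Fintype.card F = q) (n m : ℕ) (hn : 1 ≤ n) (hm : 1 ≤ m) :
    |(Nat.card {f : Polynomial F // f.Monic ∧ Irreducible f ∧ f.natDegree ≤ n} : ℝ) -
        ((q : ℝ) / (q - 1)) * (q : ℝ) ^ n / n -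
        (1 / ((q : ℝ) - 1)) * ∑ j ∈ Finset.Icc 1 (m - 1),
          stirlingPoly j ((q : ℝ) / (q - 1)) * (q : ℝ) ^ n / (n : ℝ) ^ (j + 1)| ≤
      11 * (q : ℝ) ^ ((n : ℝ) / 2) / n +
        (Nat.factorial m) *
          (3 ^ (m + 3) * (q : ℝ) ^ (n - 1) / (n : ℝ) ^ (m + 1) + 2 ^ (m + 1) / n) := by
  have hq2 : (2 : ℝ) ≤ q := by exact_mod_cast hq.two_le
  have hq0 : (q : ℝ) ≠ 0 := by positivity
  have hq1 : (q : ℝ) - 1 ≠ 0 := by linarith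
  have hn0 : (n : ℝ) ≠ 0 := by positivity
  have hcard : Nat.card F = q := by rw [Nat.card_eq_fintype_card, hF]
  have hy0 : (0 : ℝ) ≤ (q : ℝ)⁻¹ := by positivity
  have hy : (q : ℝ)⁻¹ ≤ 1 / 2 := by
    rw [one_div]
    gcongr
  have hx : (1 - (q : ℝ)⁻¹)⁻¹ = q / (q - 1) := by field_simp
  have hyx : (q : ℝ)⁻¹ * (q / (q - 1)) = 1 / (q - 1) := by field_simp
  have hasum := hasSum_geometric_mul_sum_pow_div (y := (q : ℝ)⁻¹)
    (by rw [abs_of_nonneg hy0]; linarith) hm n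
  rw [hx, hyx] at hasum
  have hmain := abs_sum_geometric_div_sub_le hy0 hy hn (by omega) hasum
  have herr := abs_sum_card_monicIrreducibles_sub_le (F := F) hn
  rw [hcard, sum_Icc_pow_div_eq hq0] at herr
  rw [Real.rpow_div_two_eq_sqrt _ (by positivity), Real.rpow_natCast,
    card_monic_irreducible_natDegree_le, Nat.cast_sum]
  set P := ∑ d ∈ Finset.Icc 1 n, ((monicIrreducibles F d).card : ℝ)
  set L := ∑ l ∈ Finset.range n, (q : ℝ)⁻¹ ^ l / ((n : ℝ) - l)
  set A := (q : ℝ) / (q - 1) / n + 1 / ((q : ℝ) - 1) *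
    ∑ j ∈ Finset.Icc 1 (m - 1), stirlingPoly j ((q : ℝ) / (q - 1)) / (n : ℝ) ^ (j + 1) with hA
  have hAq : (q : ℝ) / (q - 1) * q ^ n / n + 1 / ((q : ℝ) - 1) *
      ∑ j ∈ Finset.Icc 1 (m - 1), stirlingPoly j ((q : ℝ) / (q - 1)) * (q : ℝ) ^ n /
        (n : ℝ) ^ (j + 1) = q ^ n * A := by
    rw [hA, mul_add, mul_left_comm, Finset.mul_sum (a := (q : ℝ) ^ n)]
    congr 1
    · ring
    · congr 1
      exact Finset.sum_congr rfl fun j _ => by ring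
  have hpow : (q : ℝ) ^ n = q * q ^ (n - 1) := by rw [← pow_succ', Nat.sub_add_cancel hn]
  have hscaled : |(q : ℝ) ^ n * L - q ^ n * A| ≤ m.factorial *
      (3 ^ (m + 3) * (q : ℝ) ^ (n - 1) / (n : ℝ) ^ (m + 1) + 2 ^ (m + 1) / n) := by
    rw [← mul_sub, abs_mul, abs_of_nonneg (by positivity)]
    refine (mul_le_mul_of_nonneg_left hmain (by positivity)).trans_eq ?_
    rw [inv_pow, mul_add, mul_add, mul_inv_cancel_left₀ (by positivity)]
    congr 1
    rw [hpow]
    field_simp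
  rw [sub_sub, hAq]
  exact (abs_sub_le _ _ _).trans (add_le_add herr hscaled)
end

section
/- For all real q ≥ 2 and all integers n ≥ 1 and m ≥ 1, one has ∑_{n/2 ≤ k ≤ n−1} (k^m/q^k)·(1/(1 − k/n)) ≤ (n/1.3^{n/2})·m!/(0.75·q·(1 − 1/(0.75·q))^{m+1}), where the sum ranges over integers k with n/2 ≤ k ≤ n−1. -/
theorem sum_pow_mul_pow_le {r : ℝ} (hr0 : 0 ≤ r) (hr1 : r < 1) (n : ℕ) {m : ℕ} (hm : m ≠ 0) :
    ∑ k ∈ Finset.range n, (k : ℝ) ^ m * r ^ k ≤ m.factorial * (r / (1 - r) ^ (m + 1)) := by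
  have hpos : 0 < 1 - r := sub_pos.2 hr1
  cases n with
  | zero =>
    simp only [Finset.range_zero, Finset.sum_empty]
    positivity
  | succ N =>
    have hsum := hasSum_choose_mul_geometric_of_norm_lt_one m
      (show ‖r‖ < 1 by rwa [Real.norm_of_nonneg hr0])
    rw [Finset.sum_range_succ']
    simp only [Nat.cast_zero, zero_pow hm, zero_mul, add_zero]
    calc ∑ k ∈ Finset.range N, ((k + 1 : ℕ) : ℝ) ^ m * r ^ (k + 1)
        ≤ ∑ k ∈ Finset.range N, (m.factorial * r) * (((k + m).choose m : ℝ) * r ^ k) := by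
          refine Finset.sum_le_sum fun k _ => ?_
          have h : (k + 1) ^ m ≤ m.factorial * (k + m).choose m := by
            rw [← Nat.ascFactorial_eq_factorial_mul_choose]
            exact Nat.pow_succ_le_ascFactorial _ _
          have h' : ((k + 1 : ℕ) : ℝ) ^ m ≤ m.factorial * (k + m).choose m := by exact_mod_cast h
          calc ((k + 1 : ℕ) : ℝ) ^ m * r ^ (k + 1)
              ≤ (m.factorial * (k + m).choose m) * r ^ (k + 1) := by gcongr
            _ = (m.factorial * r) * (((k + m).choose m : ℝ) * r ^ k) := by ring
      _ = (m.factorial * r) * ∑ k ∈ Finset.range N, ((k + m).choose m : ℝ) * r ^ k := by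
          rw [Finset.mul_sum]
      _ ≤ (m.factorial * r) * (1 / (1 - r) ^ (m + 1)) := by
          gcongr
          exact sum_le_hasSum _ (fun k _ => by positivity) hsum
      _ = m.factorial * (r / (1 - r) ^ (m + 1)) := by ring

theorem one_div_one_sub_div_le {k n : ℕ} (h : k < n) : 1 / (1 - (k : ℝ) / n) ≤ n := by
  have hn : (0 : ℝ) < n := by exact_mod_cast (Nat.zero_le k).trans_lt h
  have h1 : (k : ℝ) + 1 ≤ n := by exact_mod_cast h
  rw [one_sub_div hn.ne', one_div_div]
  exact div_le_self hn.le (by linarith)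

theorem three_quarters_pow_le {k n : ℕ} (h : n ≤ 2 * k) :
    (0.75 : ℝ) ^ k ≤ 1 / (1.3 : ℝ) ^ ((n : ℝ) / 2) := by
  have h' : (n : ℝ) ≤ 2 * k := by exact_mod_cast h
  calc (0.75 : ℝ) ^ k ≤ (1 / 1.3) ^ k := by gcongr; norm_num
    _ = 1 / (1.3 : ℝ) ^ (k : ℝ) := by rw [one_div_pow, Real.rpow_natCast]
    _ ≤ 1 / (1.3 : ℝ) ^ ((n : ℝ) / 2) := by
        gcongr
        · norm_num
        · linarith

theorem stmt_8 (q : ℝ) (hq : 2 ≤ q) (n m : ℕ) (hn : 1 ≤ n) (hm : 1 ≤ m) :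
    ∑ k ∈ (Finset.range n).filter (fun k => n ≤ 2 * k),
        (k : ℝ) ^ m / q ^ k * (1 / (1 - (k : ℝ) / n)) ≤
      ((n : ℝ) / (1.3 : ℝ) ^ ((n : ℝ) / 2)) *
        (Nat.factorial m) / (0.75 * q * (1 - 1 / (0.75 * q)) ^ (m + 1)) := by
  have hq0 : 0 < q := by linarith
  have hr1 : 1 / (0.75 * q) < 1 := by
    rw [div_lt_one (by positivity)]
    linarith
  calc ∑ k ∈ (Finset.range n).filter (fun k => n ≤ 2 * k),
        (k : ℝ) ^ m / q ^ k * (1 / (1 - (k : ℝ) / n))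
      ≤ ∑ k ∈ (Finset.range n).filter (fun k => n ≤ 2 * k),
          ((n : ℝ) / (1.3 : ℝ) ^ ((n : ℝ) / 2)) * ((k : ℝ) ^ m * (1 / (0.75 * q)) ^ k) := by
        refine Finset.sum_le_sum fun k hk => ?_
        obtain ⟨hkn, hnk⟩ := Finset.mem_filter.1 hk
        calc (k : ℝ) ^ m / q ^ k * (1 / (1 - (k : ℝ) / n))
            ≤ (k : ℝ) ^ m / q ^ k * n := by
              gcongr
              exact one_div_one_sub_div_le (Finset.mem_range.1 hkn)
          _ = n * ((k : ℝ) ^ m * (1 / (0.75 * q)) ^ k) * 0.75 ^ k := by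
              rw [one_div_pow, mul_pow]
              field_simp
          _ ≤ n * ((k : ℝ) ^ m * (1 / (0.75 * q)) ^ k) * (1 / (1.3 : ℝ) ^ ((n : ℝ) / 2)) := by
              gcongr
              exact three_quarters_pow_le hnk
          _ = _ := by ring
    _ ≤ ∑ k ∈ Finset.range n,
          ((n : ℝ) / (1.3 : ℝ) ^ ((n : ℝ) / 2)) * ((k : ℝ) ^ m * (1 / (0.75 * q)) ^ k) :=
        Finset.sum_le_sum_of_subset_of_nonneg (Finset.filter_subset _ _)
          fun k _ _ => by positivity
    _ = ((n : ℝ) / (1.3 : ℝ) ^ ((n : ℝ) / 2)) *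
          ∑ k ∈ Finset.range n, (k : ℝ) ^ m * (1 / (0.75 * q)) ^ k := by
        rw [Finset.mul_sum]
    _ ≤ ((n : ℝ) / (1.3 : ℝ) ^ ((n : ℝ) / 2)) *
          (m.factorial * (1 / (0.75 * q) / (1 - 1 / (0.75 * q)) ^ (m + 1))) := by
        gcongr
        exact sum_pow_mul_pow_le (by positivity) hr1 n (by lia)
    _ = _ := by rw [div_div, mul_one_div, mul_div_assoc]
end
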